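/- arXiv:1503.00989 — 3 statements merged into one kernel-verified Lean document; each statement's English description precedes it below -/
import Mathlib

section
/- The category Enc of enclosures admits fiber products: for any pair of morphisms f₁ : E₁ → E and f₂ : E₂ → E in Enc, a pullback of f₁ and f₂ exists in Enc. -/
open scoped BigOperators

/-- The standard Cartan plane of type A₂: `{x ∈ ℝ³ : x₁ + x₂ + x₃ = 0}`. -/
abbrev Cartan : Type := {x : Fin 3 → ℝ // ∑ i, x i = 0}

/-- The root half-space `{x : xᵢ − xⱼ ≥ c}`. -/
def RootHalfSpace (i j : Fin 3) (c : ℝ) : Set Cartan := {x | c ≤ x.1 i - x.1 j}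

/-- The root hyperplane `{x : xᵢ − xⱼ = c}`. -/
def RootHyperplane (i j : Fin 3) (c : ℝ) : Set Cartan := {x | x.1 i - x.1 j = c}

/-- An enclosure: a bounded subset of the Cartan plane which is an intersection of
finitely many root half-spaces. -/
def IsEnclosure (E : Set Cartan) : Prop :=
  Bornology.IsBounded E ∧
  ∃ s : Finset (Fin 3 × Fin 3 × ℝ),
    (∀ p ∈ s, p.1 ≠ p.2.1) ∧
    E = ⋂ p ∈ s, RootHalfSpace p.1 p.2.1 p.2.2

/-- An element of the affine Weyl group: `x ↦ σ·x + v` with `σ ∈ S₃` permuting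
coordinates and `v` in the Cartan plane. -/
def IsAffWeyl (g : Cartan → Cartan) : Prop :=
  ∃ (σ : Equiv.Perm (Fin 3)) (v : Cartan),
    ∀ (x : Cartan) (i : Fin 3), (g x).1 i = x.1 (σ i) + v.1 i

theorem isAffWeyl_id : IsAffWeyl (fun x => x) := by
  refine ⟨Equiv.refl _, ⟨fun _ => 0, by simp⟩, ?_⟩
  intro x i
  simp

theorem IsAffWeyl.comp {g₂ g₁ : Cartan → Cartan} (h₂ : IsAffWeyl g₂) (h₁ : IsAffWeyl g₁) :
    IsAffWeyl (fun x => g₂ (g₁ x)) := by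
  obtain ⟨σ₂, v₂, hh₂⟩ := h₂
  obtain ⟨σ₁, v₁, hh₁⟩ := h₁
  refine ⟨σ₂.trans σ₁, ⟨fun i => v₁.1 (σ₂ i) + v₂.1 i, ?_⟩, ?_⟩
  · rw [Finset.sum_add_distrib, Equiv.sum_comp σ₂ v₁.1, v₁.2, v₂.2, add_zero]
  · intro x i
    rw [hh₂, hh₁]
    simp [Equiv.trans_apply]
    ring

open CategoryTheory

/-- The category `Enc` of enclosures. -/
structure Enc : Type where
  /-- the underlying subset of the Cartan plane -/
  carrier : Set Cartan
  isEnclosure : IsEnclosure carrier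

/-- Morphisms of enclosures are restrictions of affine Weyl group elements. -/
instance : Category Enc where
  Hom E F := {f : E.carrier → F.carrier //
    ∃ g : Cartan → Cartan, IsAffWeyl g ∧ ∀ x : E.carrier, (f x : Cartan) = g x}
  id E := ⟨fun x => x, ⟨fun y => y, isAffWeyl_id, fun _ => rfl⟩⟩
  comp {E F G} f g := ⟨fun x => g.1 (f.1 x), by
    obtain ⟨gf, hgf, hf⟩ := f.2
    obtain ⟨gg, hgg, hg⟩ := g.2
    exact ⟨fun x => gg (gf x), hgg.comp hgf, fun x => by rw [hg, hf]⟩⟩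

open CategoryTheory.Limits

/-!
Every morphism is injective, with inverse on its image again given by the affine Weyl group. Hence
a morphism factors through `f₂`, necessarily uniquely, as soon as its image lies in that of `f₂`,
and the pullback is `f₁⁻¹(f₂(E₂))`. If `gᵢ ∈ W_aff` restricts to `fᵢ`, this set is
`E₁ ∩ g₁⁻¹(g₂(E₂))`, an enclosure because `W_aff` acts by isometries permuting the root half-spaces.
-/

namespace IsAffWeyl

variable {g : Cartan → Cartan}

theorem isometry (hg : IsAffWeyl g) : Isometry g := by
  obtain ⟨σ, v, hg⟩ := hg
  have g_val (x : Cartan) : (g x).1 = x.1 ∘ σ + v.1 := funext (hg x)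
  refine Isometry.of_dist_eq fun x y => ?_
  calc dist (g x) (g y) = dist (x.1 ∘ σ) (y.1 ∘ σ) := by
        rw [Subtype.dist_eq, g_val, g_val, dist_add_right]
    _ = dist x y := (IsometryEquiv.piCongrLeft' (Y := fun _ => ℝ) σ.symm).dist_eq x.1 y.1

theorem exists_inverse (hg : IsAffWeyl g) :
    ∃ h, IsAffWeyl h ∧ Function.LeftInverse h g ∧ Function.RightInverse h g := by
  obtain ⟨σ, v, hg⟩ := hg
  have sum_sub (x : Cartan) : ∑ i, (x.1 (σ.symm i) - v.1 (σ.symm i)) = 0 := by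
    rw [Equiv.sum_comp σ.symm (fun i => x.1 i - v.1 i), Finset.sum_sub_distrib, x.2, v.2, sub_zero]
  have sum_neg : ∑ i, -v.1 (σ.symm i) = 0 := by
    rw [Finset.sum_neg_distrib, Equiv.sum_comp σ.symm v.1, v.2, neg_zero]
  refine ⟨fun x => ⟨fun i => x.1 (σ.symm i) - v.1 (σ.symm i), sum_sub x⟩,
    ⟨σ.symm, ⟨_, sum_neg⟩, fun _ _ => sub_eq_add_neg _ _⟩, fun x => ?_, fun x => ?_⟩ <;>
  · ext i
    simp [hg]

end IsAffWeyl

theorem preimage_rootHalfSpace {g : Cartan → Cartan} {σ : Fin 3 → Fin 3} {v : Fin 3 → ℝ}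
    (hg : ∀ x i, (g x).1 i = x.1 (σ i) + v i) (i j : Fin 3) (c : ℝ) :
    g ⁻¹' RootHalfSpace i j c = RootHalfSpace (σ i) (σ j) (c - (v i - v j)) := by
  ext x
  simp only [RootHalfSpace, Set.mem_preimage, Set.mem_ofPred_eq, hg, add_sub_add_comm,
    sub_le_iff_le_add]

namespace IsEnclosure

variable {A B : Set Cartan} {g : Cartan → Cartan}

theorem inter (hA : IsEnclosure A) (hB : IsEnclosure B) : IsEnclosure (A ∩ B) := by
  classical
  obtain ⟨bddA, s, hs, rfl⟩ := hA
  obtain ⟨-, t, ht, rfl⟩ := hB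
  exact ⟨bddA.subset Set.inter_subset_left, s ∪ t,
    fun p hp => (Finset.mem_union.1 hp).elim (hs p) (ht p), (Finset.set_biInter_inter s t _).symm⟩

theorem preimage (hA : IsEnclosure A) (hg : IsAffWeyl g) : IsEnclosure (g ⁻¹' A) := by
  classical
  refine ⟨hg.isometry.antilipschitz.isBounded_preimage hA.1, ?_⟩
  obtain ⟨-, s, hs, rfl⟩ := hA
  obtain ⟨σ, v, hg⟩ := hg
  refine ⟨s.image fun p => (σ p.1, σ p.2.1, p.2.2 - (v.1 p.1 - v.1 p.2.1)), ?_, ?_⟩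
  · exact Finset.forall_mem_image.2 fun p hp => σ.injective.ne (hs p hp)
  · simp only [Set.preimage_iInter₂, preimage_rootHalfSpace hg, Finset.set_biInter_finset_image]

theorem image (hA : IsEnclosure A) (hg : IsAffWeyl g) : IsEnclosure (g '' A) := by
  obtain ⟨h, hh, hleft, hright⟩ := hg.exists_inverse
  rw [Set.image_eq_preimage_of_inverse hleft hright]
  exact hA.preimage hh

end IsEnclosure

namespace Enc

variable {X Y Z : Enc}

theorem range_comp (f : X ⟶ Y) (g : Y ⟶ Z) : Set.range (f ≫ g).1 = g.1 '' Set.range f.1 :=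
  Set.range_comp g.1 f.1

theorem injective (f : X ⟶ Y) : Function.Injective f.1 := by
  obtain ⟨g, hg, f_eq⟩ := f.2
  intro x y hxy
  apply Subtype.ext
  apply hg.isometry.injective
  rw [← f_eq, ← f_eq, hxy]

instance mono (f : X ⟶ Y) : Mono f where
  right_cancellation _ _ h :=
    Subtype.ext ((injective f).comp_left (congrArg Subtype.val h))

theorem exists_comp_eq_iff_range_subset {f : X ⟶ Z} {i : Y ⟶ Z} :
    (∃ l : X ⟶ Y, l ≫ i = f) ↔ Set.range f.1 ⊆ Set.range i.1 := by
  refine ⟨?_, fun hfi => ?_⟩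
  · rintro ⟨l, rfl⟩
    exact Set.range_comp_subset_range l.1 i.1
  · choose l hl using fun x => hfi (Set.mem_range_self x)
    obtain ⟨gf, hgf, f_eq⟩ := f.2
    obtain ⟨gi, hgi, i_eq⟩ := i.2
    obtain ⟨h, hh, hleft, -⟩ := hgi.exists_inverse
    refine ⟨⟨l, fun x => h (gf x), hh.comp hgf, fun x => ?_⟩, Subtype.ext (funext hl)⟩
    change (l x : Cartan) = h (gf x)
    rw [← f_eq, ← hl, i_eq, hleft]

theorem exists_range_eq_preimage_val (X : Enc) {S : Set Cartan} (hS : IsEnclosure S) :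
    ∃ (P : Enc) (p : P ⟶ X), Set.range p.1 = Subtype.val ⁻¹' S := by
  refine ⟨⟨X.carrier ∩ S, X.isEnclosure.inter hS⟩,
    ⟨Set.inclusion Set.inter_subset_left, _, isAffWeyl_id, fun _ => rfl⟩, ?_⟩
  ext x
  simp [Set.range_inclusion]

theorem exists_range_eq_preimage_range (f : X ⟶ Z) (g : Y ⟶ Z) :
    ∃ (P : Enc) (p : P ⟶ X), Set.range p.1 = f.1 ⁻¹' Set.range g.1 := by
  obtain ⟨gf, hgf, f_eq⟩ := f.2
  obtain ⟨gg, hgg, g_eq⟩ := g.2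
  obtain ⟨P, p, hp⟩ :=
    X.exists_range_eq_preimage_val ((Y.isEnclosure.image hgg).preimage hgf)
  refine ⟨P, p, hp.trans ?_⟩
  ext x
  simp [Subtype.ext_iff, f_eq, g_eq]

end Enc

/-- The category `Enc` of enclosures admits fiber products: any pair of
morphisms `f₁ : E₁ → E`, `f₂ : E₂ → E` has a pullback in `Enc`. -/
theorem enc_hasPullback {E₁ E₂ E : Enc} (f₁ : E₁ ⟶ E) (f₂ : E₂ ⟶ E) :
    HasPullback f₁ f₂ := by
  obtain ⟨P, p₁, range_p₁⟩ := Enc.exists_range_eq_preimage_range f₁ f₂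
  have factors_iff {Q : Enc} (a : Q ⟶ E₁) : (∃ l, l ≫ p₁ = a) ↔ ∃ b, b ≫ f₂ = a ≫ f₁ := by
    rw [Enc.exists_comp_eq_iff_range_subset, Enc.exists_comp_eq_iff_range_subset, Enc.range_comp,
      Set.image_subset_iff, range_p₁]
  obtain ⟨p₂, hp₂⟩ := (factors_iff p₁).1 ⟨𝟙 P, Category.id_comp p₁⟩
  have isPullback : IsPullback p₁ p₂ f₁ f₂ := by
    refine .mk' hp₂.symm (fun _ _ _ h _ => (cancel_mono p₁).1 h) fun Q a b hab => ?_
    obtain ⟨l, rfl⟩ := (factors_iff a).2 ⟨b, hab.symm⟩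
    refine ⟨l, rfl, (cancel_mono f₂).1 ?_⟩
    rw [Category.assoc, hp₂, ← Category.assoc, hab]
  exact isPullback.hasPullback
end

section
/- Every covering of an enclosure E can be refined by a standard covering: given a finite family of morphisms V_k → E in Enc whose images cover E, there exist finitely many ordered families of parallel root hyperplanes such that each nonempty piece U_J of the associated standard covering of E is contained in the image of some V_k. -/
open scoped BigOperators

open CategoryTheory

/-- The strips associated to an ordered family of parallel root hyperplanes
`x i - x j = c 0 < c 1 < ⋯ < c (k-1)`.  For `0 ≤ m ≤ 2k`, `Strip i j c m` is:
the outer half-plane `{x i - x j ≤ c 0}` for `m = 0`; the hyperplane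
`{x i - x j = c t}` for `m = 2t+1`; the closed region between consecutive
hyperplanes for even `0 < m < 2k`; and the outer half-plane `{x i - x j ≥ c (k-1)}`
for `m = 2k`. -/
def Strip (i j : Fin 3) {k : ℕ} (c : Fin k → ℝ) (m : ℕ) : Set Cartan :=
  {x | (∀ t : Fin k, m ≤ 2 * t.1 → x.1 i - x.1 j ≤ c t) ∧
       (∀ t : Fin k, 2 * t.1 + 2 ≤ m → c t ≤ x.1 i - x.1 j) ∧
       (∀ t : Fin k, m = 2 * t.1 + 1 → x.1 i - x.1 j = c t)}

/-- An ordered family of `k ≥ 2` distinct parallel root hyperplanes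
`{x : x i - x j = c t}`, listed in their linear order. -/
structure StripFamily where
  /-- first coordinate of the root direction -/
  i : Fin 3
  /-- second coordinate of the root direction -/
  j : Fin 3
  ne : i ≠ j
  /-- the number of hyperplanes -/
  k : ℕ
  two_le : 2 ≤ k
  /-- the constants defining the parallel hyperplanes -/
  c : Fin k → ℝ
  mono : StrictMono c

/-- The `m`-th strip of a strip family. -/
def StripFamily.strip (D : StripFamily) (m : ℕ) : Set Cartan := Strip D.i D.j D.c m

/-!
A finite family of proper extreme subsets cannot cover a nonempty convex set: if a point `x`
avoids some of them and `y` avoids another one, then the midpoint of `x` and `y` avoids them all.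

Take as strip families all root hyperplanes that bound the images of the given morphisms.  None of
these hyperplanes separates two points of a piece `U` of the resulting standard covering, so every
image meets the convex set `U` in an extreme subset of `U`.  These subsets cover `U`, hence one of
them is `U` itself.
-/

section OrderedSemiring

variable {𝕜 M : Type*} [Semiring 𝕜] [PartialOrder 𝕜] [AddCommMonoid M] [Module 𝕜 M] {A : Set M}

theorem isExtreme_inter_iInter {ι : Sort*} {B : ι → Set M}
    (h : ∀ i, IsExtreme 𝕜 A (A ∩ B i)) : IsExtreme 𝕜 A (A ∩ ⋂ i, B i) := by
  refine ⟨Set.inter_subset_left, ?_⟩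
  rintro x hx y hy z ⟨hzA, hz⟩ hxyz
  refine ⟨hx, Set.mem_iInter.2 fun i ↦ ?_⟩
  exact ((h i).left_mem_of_mem_openSegment hx hy ⟨hzA, Set.mem_iInter.1 hz i⟩ hxyz).2

/-- The hyperplane `φ = c` does not separate `A`: the set `A` lies in one of the two closed
half-spaces bounded by this hyperplane, which it may touch. -/
def OnOneSide (φ : M →ₗ[𝕜] 𝕜) (c : 𝕜) (A : Set M) : Prop :=
  (∀ x ∈ A, c ≤ φ x) ∨ ∀ x ∈ A, φ x ≤ c

theorem OnOneSide.mono {φ : M →ₗ[𝕜] 𝕜} {c : 𝕜} {B : Set M} (h : OnOneSide φ c B) (hAB : A ⊆ B) :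
    OnOneSide φ c A :=
  h.imp (fun h x hx ↦ h x (hAB hx)) fun h x hx ↦ h x (hAB hx)

end OrderedSemiring

section OrderedField

variable {𝕜 M ι : Type*} [Field 𝕜] [LinearOrder 𝕜] [IsStrictOrderedRing 𝕜]
  [AddCommGroup M] [Module 𝕜 M] {A : Set M}

theorem exists_eq_of_isExtreme_of_subset_biUnion {s : Finset ι} {B : ι → Set M}
    (hA : Convex 𝕜 A) (hne : A.Nonempty) (hB : ∀ i ∈ s, IsExtreme 𝕜 A (B i))
    (hcov : A ⊆ ⋃ i ∈ s, B i) : ∃ i ∈ s, B i = A := by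
  classical
  let _ : Invertible (2 : 𝕜) := invertibleOfNonzero two_ne_zero
  induction s using Finset.induction_on with
  | empty => simp [hne.ne_empty] at hcov
  | insert j s _ ih =>
    rw [Finset.forall_mem_insert] at hB
    by_cases hj : B j = A
    · exact ⟨j, Finset.mem_insert_self j s, hj⟩
    obtain ⟨y, hyA, hyj⟩ : ∃ y ∈ A, y ∉ B j :=
      Set.not_subset.1 fun h ↦ hj (hB.1.subset.antisymm h)
    have hcov' : A ⊆ ⋃ i ∈ s, B i := by
      intro x hxA
      have hmid := midpoint_mem_openSegment (𝕜 := 𝕜) x y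
      obtain ⟨i, hi, hiB⟩ := Set.mem_iUnion₂.1 (hcov (hA.midpoint_mem hxA hyA))
      rcases Finset.mem_insert.1 hi with rfl | his
      · exact absurd (hB.1.right_mem_of_mem_openSegment hxA hyA hiB hmid) hyj
      · exact Set.mem_biUnion his
          ((hB.2 i his).left_mem_of_mem_openSegment hxA hyA hiB hmid)
    obtain ⟨i, hi, hiA⟩ := ih hB.2 hcov'
    exact ⟨i, Finset.mem_insert_of_mem hi, hiA⟩

theorem OnOneSide.isExtreme_inter_halfSpace {φ : M →ₗ[𝕜] 𝕜} {c : 𝕜}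
    (h : OnOneSide φ c A) :
    IsExtreme 𝕜 A (A ∩ {x | c ≤ φ x}) := by
  refine ⟨Set.inter_subset_left, ?_⟩
  rintro x hx y hy _ ⟨-, hz⟩ ⟨a, b, ha, hb, hab, rfl⟩
  refine ⟨hx, ?_⟩
  rcases h with hge | hle
  · exact hge x hx
  · have hz' : c ≤ a * φ x + b * φ y := by simpa using hz
    have hb' : b * φ y ≤ b * c := mul_le_mul_of_nonneg_left (hle y hy) hb.le
    have ha' : a * c ≤ a * φ x := by linear_combination hz' + hb' + c * hab
    exact le_of_mul_le_mul_left ha' ha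

theorem exists_subset_of_subset_iUnion_of_onOneSide [Finite ι] {κ : Type*} {S : ι → Set κ}
    {φ : κ → M →ₗ[𝕜] 𝕜} {c : κ → 𝕜} (hA : Convex 𝕜 A) (hne : A.Nonempty)
    (hside : ∀ i, ∀ k ∈ S i, OnOneSide (φ k) (c k) A)
    (hcov : A ⊆ ⋃ i, ⋂ k ∈ S i, {x | c k ≤ φ k x}) :
    ∃ i, A ⊆ ⋂ k ∈ S i, {x | c k ≤ φ k x} := by
  cases nonempty_fintype ι
  have hcov' : A ⊆ ⋃ i ∈ Finset.univ, A ∩ ⋂ k ∈ S i, {x | c k ≤ φ k x} := by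
    simpa [← Set.inter_iUnion] using hcov
  obtain ⟨i, -, hi⟩ := exists_eq_of_isExtreme_of_subset_biUnion hA hne
    (fun i _ ↦ isExtreme_inter_iInter fun k ↦ isExtreme_inter_iInter fun hk ↦
      (hside i k hk).isExtreme_inter_halfSpace) hcov'
  exact ⟨i, Set.inter_eq_left.1 hi⟩

end OrderedField

/-- The Cartan plane as a linear subspace of `ℝ³`; its coercion to a type is definitionally
`Cartan`, which thereby inherits the structure of a real vector space. -/
def cartanSubmodule : Submodule ℝ (Fin 3 → ℝ) where
  carrier := {x | ∑ i, x i = 0}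
  zero_mem' := by simp
  add_mem' := by
    intro x y (hx : ∑ i, x i = 0) (hy : ∑ i, y i = 0)
    simp [Finset.sum_add_distrib, hx, hy]
  smul_mem' := by
    intro r x (hx : ∑ i, x i = 0)
    simp [← Finset.mul_sum, hx]

instance : AddCommGroup Cartan := inferInstanceAs (AddCommGroup cartanSubmodule)

instance : Module ℝ Cartan := inferInstanceAs (Module ℝ cartanSubmodule)

/-- The root `x ↦ xᵢ − xⱼ` as a linear form on the Cartan plane (zero when `i = j`). -/
def rootForm (i j : Fin 3) : Cartan →ₗ[ℝ] ℝ where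
  toFun x := x.1 i - x.1 j
  map_add' x y := add_sub_add_comm (x.1 i) (y.1 i) (x.1 j) (y.1 j)
  map_smul' r x := (mul_sub r (x.1 i) (x.1 j)).symm

/-- A root polyhedron is an intersection of finitely many root half-spaces; the enclosures are
the bounded root polyhedra. -/
def IsRootPolyhedron (P : Set Cartan) : Prop :=
  ∃ s : Finset (Fin 3 × Fin 3 × ℝ),
    (∀ p ∈ s, p.1 ≠ p.2.1) ∧ P = ⋂ p ∈ s, RootHalfSpace p.1 p.2.1 p.2.2

theorem IsRootPolyhedron.convex {P : Set Cartan} (hP : IsRootPolyhedron P) : Convex ℝ P := by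
  obtain ⟨s, -, rfl⟩ := hP
  exact convex_iInter₂ fun p _ ↦ convex_halfSpace_ge (rootForm p.1 p.2.1).isLinear p.2.2

theorem IsAffWeyl.exists_inverse_s5 {g : Cartan → Cartan} (hg : IsAffWeyl g) :
    ∃ h, IsAffWeyl h ∧ Function.LeftInverse h g ∧ Function.RightInverse h g := by
  obtain ⟨σ, v, hgv⟩ := hg
  have hsum (x : Cartan) : ∑ i, x.1 (σ.symm i) = 0 := (Equiv.sum_comp σ.symm x.1).trans x.2
  let h (x : Cartan) : Cartan :=
    ⟨fun i ↦ x.1 (σ.symm i) - v.1 (σ.symm i), by simp [Finset.sum_sub_distrib, hsum]⟩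
  refine ⟨h, ⟨σ.symm, ⟨fun i ↦ -v.1 (σ.symm i), by simp [hsum]⟩, fun x i ↦ ?_⟩,
    fun x ↦ ?_, fun x ↦ ?_⟩
  · exact sub_eq_add_neg _ _
  · ext i
    simp [h, hgv]
  · ext i
    simp [h, hgv]

theorem IsRootPolyhedron.preimage {P : Set Cartan} (hP : IsRootPolyhedron P)
    {g : Cartan → Cartan} (hg : IsAffWeyl g) : IsRootPolyhedron (g ⁻¹' P) := by
  classical
  obtain ⟨s, hs, rfl⟩ := hP
  obtain ⟨σ, v, hgv⟩ := hg
  have hpre (i j : Fin 3) (c : ℝ) :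
      g ⁻¹' RootHalfSpace i j c = RootHalfSpace (σ i) (σ j) (c - (v.1 i - v.1 j)) := by
    ext x
    simp only [RootHalfSpace, Set.mem_preimage, Set.mem_ofPred_eq, hgv, sub_le_iff_le_add,
      add_sub_add_comm]
  refine ⟨s.image fun p ↦ (σ p.1, σ p.2.1, p.2.2 - (v.1 p.1 - v.1 p.2.1)), ?_, ?_⟩
  · simpa only [Finset.forall_mem_image, ne_eq, σ.injective.eq_iff] using hs
  · simp only [Set.preimage_iInter, hpre, Finset.set_biInter_finset_image]

theorem IsRootPolyhedron.image {P : Set Cartan} (hP : IsRootPolyhedron P)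
    {g : Cartan → Cartan} (hg : IsAffWeyl g) : IsRootPolyhedron (g '' P) := by
  obtain ⟨h, hh, hleft, hright⟩ := hg.exists_inverse_s5
  rw [Set.image_eq_preimage_of_inverse hleft hright]
  exact hP.preimage hh

theorem isRootPolyhedron_range_hom {V E : Enc} (f : V ⟶ E) :
    IsRootPolyhedron (Set.range fun y ↦ (f.1 y : Cartan)) := by
  obtain ⟨g, hg, hfg⟩ := f.2
  simp only [hfg, ← Set.image_eq_range]
  exact IsRootPolyhedron.image V.isEnclosure.2 hg

theorem StripFamily.convex_strip (D : StripFamily) (m : ℕ) : Convex ℝ (D.strip m) := by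
  have hφ := (rootForm D.i D.j).isLinear
  simp only [StripFamily.strip, Strip, Set.ofPred_and, Set.ofPred_forall]
  exact (convex_iInter₂ fun t _ ↦ convex_halfSpace_le hφ (D.c t)).inter <|
    (convex_iInter₂ fun t _ ↦ convex_halfSpace_ge hφ (D.c t)).inter <|
    convex_iInter₂ fun t _ ↦ convex_hyperplane hφ (D.c t)

theorem StripFamily.onOneSide_strip (D : StripFamily) (m : ℕ) (t : Fin D.k) :
    OnOneSide (rootForm D.i D.j) (D.c t) (D.strip m) := by
  rcases lt_or_ge m (2 * t + 2) with hlt | hge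
  · right
    rintro x ⟨hle, -, heq⟩
    rcases Nat.lt_succ_iff_lt_or_eq.1 hlt with hlt | hm
    · exact hle t (Nat.lt_succ_iff.1 hlt)
    · exact (heq t hm).le
  · exact .inl fun x hx ↦ hx.2.1 t hge

/-- A strip family containing the root hyperplane `xᵢ − xⱼ = c`.  A strip family has at least two
members; the second one, `xᵢ − xⱼ = c + 1`, is an arbitrary choice. -/
noncomputable def StripFamily.ofRoot {i j : Fin 3} (hij : i ≠ j) (c : ℝ) : StripFamily where
  i := i
  j := j
  ne := hij
  k := 2
  two_le := le_rfl
  c t := c + t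
  mono _ _ hst := by simpa using hst

theorem StripFamily.onOneSide_ofRoot_strip {i j : Fin 3} (hij : i ≠ j) (c : ℝ) (m : ℕ) :
    OnOneSide (rootForm i j) c ((StripFamily.ofRoot hij c).strip m) := by
  simpa [StripFamily.ofRoot] using (StripFamily.ofRoot hij c).onOneSide_strip m (0 : Fin 2)

theorem exists_stripFamilies_onOneSide {T : Set (Fin 3 × Fin 3 × ℝ)} (hT : T.Finite)
    (hne : ∀ p ∈ T, p.1 ≠ p.2.1) :
    ∃ (a : ℕ) (D : Fin a → StripFamily), ∀ (J : Fin a → ℕ), ∀ p ∈ T,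
      OnOneSide (rootForm p.1 p.2.1) p.2.2 (⋂ l, (D l).strip (J l)) := by
  have := hT.to_subtype
  obtain ⟨a, ⟨e⟩⟩ := Finite.exists_equiv_fin T
  refine ⟨a, fun l ↦ .ofRoot (hne _ (e.symm l).2) (e.symm l).1.2.2, fun J p hp ↦ ?_⟩
  obtain ⟨l, hl⟩ := e.symm.surjective ⟨p, hp⟩
  obtain rfl : (e.symm l).1 = p := congrArg Subtype.val hl
  exact (StripFamily.onOneSide_ofRoot_strip _ _ (J l)).mono (Set.iInter_subset _ l)

theorem covering_refined_by_standard_general {ι : Type*} [Finite ι] {E : Set Cartan}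
    {P : ι → Set Cartan} (hE : Convex ℝ E) (hP : ∀ m, IsRootPolyhedron (P m))
    (hcov : E ⊆ ⋃ m, P m) :
    ∃ (a : ℕ) (D : Fin a → StripFamily), ∀ J : Fin a → ℕ,
      (E ∩ ⋂ l, (D l).strip (J l)).Nonempty → ∃ m, E ∩ ⋂ l, (D l).strip (J l) ⊆ P m := by
  choose s hs hPs using hP
  obtain rfl : P = fun m ↦ ⋂ p ∈ s m, RootHalfSpace p.1 p.2.1 p.2.2 := funext hPs
  obtain ⟨a, D, hside⟩ := exists_stripFamilies_onOneSide
    (T := ⋃ m, (s m : Set (Fin 3 × Fin 3 × ℝ)))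
    (Set.finite_iUnion fun m ↦ (s m).finite_toSet)
    fun p hp ↦ let ⟨m, hm⟩ := Set.mem_iUnion.1 hp; hs m p hm
  refine ⟨a, D, fun J hne ↦ ?_⟩
  have hconv : Convex ℝ (E ∩ ⋂ l, (D l).strip (J l)) :=
    hE.inter (convex_iInter fun l ↦ (D l).convex_strip (J l))
  exact exists_subset_of_subset_iUnion_of_onOneSide (S := fun m ↦ (s m : Set _))
    (φ := fun p ↦ rootForm p.1 p.2.1) (c := fun p ↦ p.2.2) hconv hne
    (fun m p hp ↦ (hside J p (Set.mem_iUnion_of_mem m hp)).mono Set.inter_subset_right)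
    (Set.inter_subset_left.trans hcov)

/-- Every covering of an enclosure `E` can be refined by a standard
covering: given a finite family of morphisms `V_k → E` in `Enc` whose images cover `E`,
there are finitely many ordered families of parallel root hyperplanes such that each
nonempty piece `U_J = E ∩ ⋂ strips` of the associated standard covering of `E` is
contained in the image of some `V_k`. -/
theorem covering_refined_by_standard (E : Enc) (n : ℕ) (Vk : Fin n → Enc)
    (f : ∀ m, Vk m ⟶ E)
    (hcov : ∀ x : E.carrier, ∃ (m : Fin n) (y : (Vk m).carrier), (f m).1 y = x) :
    ∃ (a : ℕ) (D : Fin a → StripFamily),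
      ∀ J : Fin a → ℕ, (∀ l, J l ≤ 2 * (D l).k) →
        (E.carrier ∩ ⋂ l, (D l).strip (J l)).Nonempty →
        ∃ m : Fin n,
          (E.carrier ∩ ⋂ l, (D l).strip (J l)) ⊆
            {x : Cartan | ∃ y : (Vk m).carrier, ((f m).1 y : Cartan) = x} := by
  obtain ⟨a, D, hD⟩ := covering_refined_by_standard_general
    (IsRootPolyhedron.convex E.isEnclosure.2) (fun m ↦ isRootPolyhedron_range_hom (f m))
    fun x hx ↦ let ⟨m, y, hy⟩ := hcov ⟨x, hx⟩
      Set.mem_iUnion.2 ⟨m, y, congrArg Subtype.val hy⟩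
  exact ⟨a, D, fun J _ ↦ hD J⟩
end

section
/- Let Γ be a spherical pre-building of type A₂, i.e. a connected bipartite graph (every edge joining a positive node to a negative node) with no cycles of length ≤ 4 in which every node lies on at least one edge. Suppose in addition that any two nodes of the same parity are at graph distance ≤ 2, and that every node lies on at least two distinct edges. Then any two nodes of Γ are at graph distance ≤ 3 and every pair of nodes is contained in a cycle of length 6; that is, Γ is a spherical building of type A₂. (This is the graph-theoretic content of the lemma that a construction satisfying SPB-loc, Ex-Obt and Ex-Side satisfies SB-loc: Ex-Obt gives that any two nodes of the same parity in each local spherical construction are at distance ≤ 2, and Ex-Side gives that every node lies on at least two distinct edges.) -/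
/-!
Spherical buildings of type A₂ are the case `n = 2` of generalized `(n + 1)`-gons. When all cycles
are longer than `2 * n`, a vertex at distance at most `n` from `v` has at most one neighbour closer
to `v`; as it has a second neighbour, geodesics from `v` can be prolonged up to length `n + 1`. At
an endpoint `x` at distance `n + 1` from `v` every neighbour is closer to `v`, so a geodesic
arriving through one neighbour of `x` is matched by another one arriving through a second
neighbour. The cycle contained in the union of these two has even length greater than `2 * n`, so
it uses up both of them.
-/

section GeneralizedPolygon

open SimpleGraph

variable {V : Type*} {G : SimpleGraph V}

theorem eq_of_isPath_of_forall_isCycle_lt_length {n : ℕ}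
    (hgirth : ∀ (v : V) (c : G.Walk v v), c.IsCycle → n < c.length) {u v : V} {p q : G.Walk u v}
    (hp : p.IsPath) (hq : q.IsPath) (hlen : p.length + q.length ≤ n) : p = q := by
  by_contra hne
  obtain ⟨w, -, -, c, hc, hclen⟩ := hp.exists_isCycle_length_le_add_of_ne hq hne
  exact (hgirth w c hc).not_ge (hclen.trans hlen)

theorem exists_isCycle_support_subset_of_isPath_ne {u v : V} {p q : G.Walk u v}
    (hgirth : ∀ (w : V) (c : G.Walk w w), c.IsCycle → p.length + q.length ≤ c.length)
    (hp : p.IsPath) (hq : q.IsPath) (hne : p ≠ q) :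
    ∃ (w : V) (c : G.Walk w w), c.IsCycle ∧ c.length = p.length + q.length ∧
      p.support ⊆ c.support := by
  obtain ⟨w, z, p', q', hp', hq', hc⟩ := hp.exists_isCycle_of_ne hq hne
  have hclen : (p'.append q'.reverse).length = p'.length + q'.length := by
    rw [Walk.length_append, Walk.length_reverse]
  have hple : p'.length ≤ p.length := Walk.length_le_of_isSubwalk hp'
  have hqle : q'.length ≤ q.length := Walk.length_le_of_isSubwalk hq'
  have hle := hgirth w _ hc
  have hplen : p'.support.length = p.support.length := by
    rw [Walk.length_support, Walk.length_support]
    lia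
  have hsupp : p'.support = p.support :=
    (Walk.isSubwalk_iff_support_isInfix.mp hp').eq_of_length hplen
  refine ⟨w, _, hc, by lia, ?_⟩
  rw [← hsupp]
  exact Walk.support_subset_support_append_left p' q'.reverse

theorem exists_isPath_length_eq_dist_penultimate_eq (hconn : G.Connected) {v x y : V}
    (hadj : G.Adj y x) (hdist : G.dist v x = G.dist v y + 1) :
    ∃ p : G.Walk v x, p.IsPath ∧ p.length = G.dist v x ∧ p.penultimate = y := by
  obtain ⟨p, hp⟩ := hconn.exists_walk_length_eq_dist v y
  have hlen : (p.concat hadj).length = G.dist v x := by rw [Walk.length_concat, hp, hdist]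
  exact ⟨p.concat hadj, Walk.isPath_of_length_eq_dist _ hlen, hlen, p.penultimate_concat hadj⟩

theorem eq_of_adj_of_dist_eq_add_one {n : ℕ} (hconn : G.Connected)
    (hgirth : ∀ (v : V) (c : G.Walk v v), c.IsCycle → 2 * n < c.length) {v x y z : V}
    (hx : G.dist v x ≤ n) (hy : G.Adj y x) (hz : G.Adj z x)
    (hvy : G.dist v x = G.dist v y + 1) (hvz : G.dist v x = G.dist v z + 1) : y = z := by
  obtain ⟨p, hp, hplen, rfl⟩ := exists_isPath_length_eq_dist_penultimate_eq hconn hy hvy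
  obtain ⟨q, hq, hqlen, rfl⟩ := exists_isPath_length_eq_dist_penultimate_eq hconn hz hvz
  rw [eq_of_isPath_of_forall_isCycle_lt_length hgirth hp hq (by lia)]

theorem coloring_eq_iff_ne_of_adj (C : G.Coloring Bool) (v : V) {x y : V} (hadj : G.Adj x y) :
    C v = C x ↔ C v ≠ C y := by
  have (a b c : Bool) (hbc : b ≠ c) : a = b ↔ a ≠ c := by
    revert a b c
    decide
  exact this _ _ _ (C.valid hadj)

theorem even_dist_iff_coloring_eq (C : G.Coloring Bool) (hconn : G.Connected) (u v : V) :
    Even (G.dist u v) ↔ C u = C v := by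
  obtain ⟨p, hp⟩ := hconn.exists_walk_length_eq_dist u v
  rw [← hp, C.even_length_iff_congr p, Bool.coe_iff_coe]

theorem even_length_of_coloring (C : G.Coloring Bool) {v : V} (c : G.Walk v v) : Even c.length :=
  (C.even_length_iff_congr c).2 Iff.rfl

theorem dist_eq_add_one_or_of_adj (C : G.Coloring Bool) (hconn : G.Connected) (v : V) {x y : V}
    (hadj : G.Adj x y) : G.dist v y = G.dist v x + 1 ∨ G.dist v x = G.dist v y + 1 := by
  have hparity : Even (G.dist v x) ↔ ¬ Even (G.dist v y) := by
    rw [even_dist_iff_coloring_eq C hconn, even_dist_iff_coloring_eq C hconn,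
      coloring_eq_iff_ne_of_adj C v hadj]
  have hne : G.dist v x ≠ G.dist v y := fun heq ↦ by
    rw [heq] at hparity
    exact iff_not_self hparity
  have := hadj.diff_dist_adj (u := v)
  lia

theorem dist_le_add_one_of_coloring (C : G.Coloring Bool) {n : ℕ} (hnbr : ∀ v, ∃ w, G.Adj v w)
    (hdist : ∀ v w, (C v = C w ↔ Even n) → G.dist v w ≤ n) (v w : V) : G.dist v w ≤ n + 1 := by
  by_cases hvw : C v = C w ↔ Even n
  · exact (hdist v w hvw).trans n.le_succ
  · obtain ⟨u, hu⟩ := hnbr w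
    have hvu : G.dist v u ≤ n := hdist v u <| by
      have := coloring_eq_iff_ne_of_adj C v hu
      tauto
    have := hu.diff_dist_adj (u := v)
    lia

theorem exists_adj_dist_eq_add_one (C : G.Coloring Bool) (hconn : G.Connected) {n : ℕ}
    (hgirth : ∀ (v : V) (c : G.Walk v v), c.IsCycle → 2 * n < c.length)
    {v x : V} (htwo : ∃ y z, y ≠ z ∧ G.Adj x y ∧ G.Adj x z) (hx : G.dist v x ≤ n) :
    ∃ y, G.Adj x y ∧ G.dist v y = G.dist v x + 1 := by
  obtain ⟨y, z, hne, hy, hz⟩ := htwo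
  by_contra! hcloser
  have hvy := (dist_eq_add_one_or_of_adj C hconn v hy).resolve_left (hcloser y hy)
  have hvz := (dist_eq_add_one_or_of_adj C hconn v hz).resolve_left (hcloser z hz)
  exact hne (eq_of_adj_of_dist_eq_add_one hconn hgirth hx hy.symm hz.symm hvy hvz)

theorem exists_dist_add_dist_eq_of_dist_le (C : G.Coloring Bool) (hconn : G.Connected) {n : ℕ}
    (hgirth : ∀ (v : V) (c : G.Walk v v), c.IsCycle → 2 * n < c.length)
    (htwo : ∀ v, ∃ w w', w ≠ w' ∧ G.Adj v w ∧ G.Adj v w') {v w : V} {k : ℕ}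
    (hvw : G.dist v w ≤ k) (hk : k ≤ n + 1) :
    ∃ x, G.dist v x = k ∧ G.dist v w + G.dist w x = k := by
  induction k, hvw using Nat.le_induction with
  | base => exact ⟨w, rfl, by rw [dist_self, add_zero]⟩
  | succ k _ ih =>
    obtain ⟨x, hvx, hwx⟩ := ih (by lia)
    obtain ⟨y, hxy, hvy⟩ := exists_adj_dist_eq_add_one C hconn hgirth (htwo x) (v := v) (by lia)
    have htri : G.dist v y ≤ G.dist v w + G.dist w y := hconn.dist_triangle
    have := hxy.diff_dist_adj (u := w)
    exact ⟨y, by lia, by lia⟩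

theorem exists_isCycle_support_subset_of_length_eq_dist (C : G.Coloring Bool)
    (hconn : G.Connected) {n : ℕ}
    (hgirth : ∀ (v : V) (c : G.Walk v v), c.IsCycle → 2 * n < c.length) {v x : V}
    (htwo : ∃ y z, y ≠ z ∧ G.Adj x y ∧ G.Adj x z) (hdiam : ∀ y, G.dist v y ≤ n + 1)
    (hx : G.dist v x = n + 1) {p : G.Walk v x} (hp : p.length = G.dist v x) :
    ∃ (u : V) (c : G.Walk u u), c.IsCycle ∧ c.length = 2 * (n + 1) ∧ p.support ⊆ c.support := by
  obtain ⟨y, hxy, hyp⟩ : ∃ y, G.Adj x y ∧ y ≠ p.penultimate := by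
    obtain ⟨y, z, hne, hy, hz⟩ := htwo
    rcases eq_or_ne y p.penultimate with rfl | hyp
    · exact ⟨z, hz, hne.symm⟩
    · exact ⟨y, hy, hyp⟩
  have hvy : G.dist v x = G.dist v y + 1 := by
    have := dist_eq_add_one_or_of_adj C hconn v hxy
    have := hdiam y
    lia
  obtain ⟨q, hq, hqlen, hqy⟩ := exists_isPath_length_eq_dist_penultimate_eq hconn hxy.symm hvy
  have hpq : p ≠ q := by
    rintro rfl
    exact hyp hqy.symm
  have hlen : p.length + q.length = 2 * (n + 1) := by lia
  have hlong (u : V) (c : G.Walk u u) (hc : c.IsCycle) : p.length + q.length ≤ c.length := by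
    obtain ⟨k, hk⟩ := even_length_of_coloring C c
    have := hgirth u c hc
    lia
  rw [← hlen]
  exact exists_isCycle_support_subset_of_isPath_ne hlong (p.isPath_of_length_eq_dist hp) hq hpq

-- `C v = C w ↔ Even n` says that the distance from `v` to `w` has the parity of `n`.
theorem sphericalPreBuilding_isBuilding_general (C : G.Coloring Bool) (hconn : G.Connected) {n : ℕ}
    (hgirth : ∀ (v : V) (c : G.Walk v v), c.IsCycle → 2 * n < c.length)
    (hdist : ∀ v w, (C v = C w ↔ Even n) → G.dist v w ≤ n)
    (htwo : ∀ v, ∃ w w', w ≠ w' ∧ G.Adj v w ∧ G.Adj v w') :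
    (∀ v w, G.dist v w ≤ n + 1) ∧
      ∀ v w, ∃ (u : V) (c : G.Walk u u), c.IsCycle ∧ c.length = 2 * (n + 1) ∧
        v ∈ c.support ∧ w ∈ c.support := by
  have hnbr (v : V) : ∃ w, G.Adj v w := (htwo v).imp fun _ ⟨_, _, hadj, _⟩ ↦ hadj
  have hdiam := dist_le_add_one_of_coloring C hnbr hdist
  refine ⟨hdiam, fun v w ↦ ?_⟩
  obtain ⟨x, hvx, hvwx⟩ :=
    exists_dist_add_dist_eq_of_dist_le C hconn hgirth htwo (hdiam v w) le_rfl
  obtain ⟨p, hp⟩ := hconn.exists_walk_length_eq_dist v w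
  obtain ⟨q, hq⟩ := hconn.exists_walk_length_eq_dist w x
  have hpq : (p.append q).length = G.dist v x := by rw [Walk.length_append, hp, hq, hvwx, hvx]
  obtain ⟨u, c, hc, hclen, hsub⟩ := exists_isCycle_support_subset_of_length_eq_dist C hconn hgirth
    (htwo x) (hdiam v) hvx hpq
  have hw : w ∈ (p.append q).support :=
    (Walk.mem_support_append_iff p q).2 (.inl p.end_mem_support)
  exact ⟨u, c, hc, hclen, hsub (Walk.start_mem_support _), hsub hw⟩

end GeneralizedPolygon

/-- Let `Γ` be a spherical pre-building of type A₂: a connected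
bipartite graph (every edge joins a positive node to a negative node, recorded by the
parity function `sign`), with no cycles of length ≤ 4, in which every node lies on at
least one edge.  If in addition any two nodes of the same parity are at graph distance
≤ 2 and every node lies on at least two distinct edges, then any two nodes are at graph
distance ≤ 3 and every pair of nodes is contained in a cycle of length 6; i.e. `Γ` is a
spherical building of type A₂. -/
theorem sphericalPreBuilding_isBuilding {Vtx : Type} (G : SimpleGraph Vtx)
    (sign : Vtx → Bool)
    (hbip : ∀ v w, G.Adj v w → sign v ≠ sign w)
    (hconn : G.Connected)
    (hedge : ∀ v, ∃ w, G.Adj v w)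
    (hgirth : ∀ (v : Vtx) (c : G.Walk v v), c.IsCycle → 4 < c.length)
    (hsame : ∀ v w, sign v = sign w → G.dist v w ≤ 2)
    (htwo : ∀ v, ∃ w w', w ≠ w' ∧ G.Adj v w ∧ G.Adj v w') :
    (∀ v w, G.dist v w ≤ 3) ∧
      ∀ v w, ∃ (u : Vtx) (c : G.Walk u u), c.IsCycle ∧ c.length = 6 ∧
        v ∈ c.support ∧ w ∈ c.support := by
  exact sphericalPreBuilding_isBuilding_general (.mk sign fun {v w} ↦ hbip v w) hconn (n := 2)
    hgirth (fun v w h ↦ hsame v w (h.2 even_two)) htwo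
end
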